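/- Let G be a finite abelian group with exp(G) = n odd and r(G) ≥ n − 1, and let G₀ ⊆ G be a minimal non-half-factorial LCN-set with min Δ(G₀) = max Δ*(G). Then there exists g ∈ G₀ such that G₀ \ {g} is independent. -/

import Mathlib

open Multiset

section Defs

variable {G : Type*} [AddCommGroup G]

/-- `S` is a zero-sum sequence over `G₀`: a multiset with entries in `G₀` and sum `0`. -/
def IsZeroSumSeq (G₀ : Set G) (S : Multiset G) : Prop :=
  (∀ x ∈ S, x ∈ G₀) ∧ S.sum = 0

/-- `S` is an atom over `G₀`: a nonempty zero-sum sequence over `G₀` that is not the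
union of two nonempty zero-sum sequences over `G₀`. -/
def IsAtomSeq (G₀ : Set G) (S : Multiset G) : Prop :=
  IsZeroSumSeq G₀ S ∧ S ≠ 0 ∧
    ∀ A B : Multiset G, IsZeroSumSeq G₀ A → IsZeroSumSeq G₀ B →
      A ≠ 0 → B ≠ 0 → S ≠ A + B

/-- The set of lengths of `B`: all `k` such that `B` is a union of `k` atoms over `G₀`. -/
def LengthSet (G₀ : Set G) (B : Multiset G) : Set ℕ :=
  {k | ∃ l : Multiset (Multiset G), Multiset.card l = k ∧
      (∀ A ∈ l, IsAtomSeq G₀ A) ∧ l.sum = B}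

/-- The set of successive distances of a set of naturals. -/
def DeltaOf (L : Set ℕ) : Set ℕ :=
  {d | ∃ x ∈ L, ∃ y ∈ L, x < y ∧ y - x = d ∧ ∀ z ∈ L, ¬(x < z ∧ z < y)}

/-- The set of distances `Δ(G₀)`. -/
def DeltaSet (G₀ : Set G) : Set ℕ :=
  {d | ∃ B : Multiset G, IsZeroSumSeq G₀ B ∧ B ≠ 0 ∧ d ∈ DeltaOf (LengthSet G₀ B)}

/-- `G₀` is half-factorial if `Δ(G₀) = ∅`. -/
def IsHalfFactorialSet (G₀ : Set G) : Prop := DeltaSet G₀ = ∅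

/-- `G₀` is minimal non-half-factorial if `Δ(G₀) ≠ ∅` and every proper subset is
half-factorial. -/
def IsMinNonHalfFactorial (G₀ : Set G) : Prop :=
  (DeltaSet G₀).Nonempty ∧ ∀ G₁ : Set G, G₁ ⊂ G₀ → DeltaSet G₁ = ∅

/-- The cross number `k(S) = Σ 1/ord(g)` of a multiset over `G`. -/
noncomputable def crossNumber (S : Multiset G) : ℚ :=
  (S.map (fun g => ((addOrderOf g : ℚ))⁻¹)).sum

/-- `G₀` is an LCN-set if every atom over `G₀` has cross number at least 1. -/
def IsLCNSet (G₀ : Set G) : Prop :=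
  ∀ U : Multiset G, IsAtomSeq G₀ U → 1 ≤ crossNumber U

/-- A subset of `G \ {0}` is independent if any integral linear relation on its elements
has all summands zero. -/
def IsIndependentSet (E : Set G) : Prop :=
  (0 : G) ∉ E ∧ ∀ s : Finset G, ↑s ⊆ E → ∀ f : G → ℤ,
    (∑ e ∈ s, f e • e) = 0 → ∀ e ∈ s, f e • e = 0

/-- `d` is a greatest common divisor of the set `S` of naturals. -/
def IsSetGcd (S : Set ℕ) (d : ℕ) : Prop :=
  (∀ s ∈ S, d ∣ s) ∧ ∀ e : ℕ, (∀ s ∈ S, e ∣ s) → e ∣ d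

end Defs

/-- The set of minimal distances `Δ*(G)`. -/
def DeltaStar (G : Type*) [AddCommGroup G] : Set ℕ :=
  {d | ∃ G₀ : Set G, (DeltaSet G₀).Nonempty ∧ d = sInf (DeltaSet G₀)}

/-- The `p`-rank of a finite abelian group: `log_p` of the order of the `p`-torsion
subgroup `{x | p • x = 0}`. -/
noncomputable def pRank (G : Type*) [AddCommGroup G] (p : ℕ) : ℕ :=
  Nat.log p (Nat.card {x : G // p • x = 0})

/-- The rank of a finite abelian group: the maximum of the `p`-ranks over all primes. -/
noncomputable def rankG (G : Type*) [AddCommGroup G] : ℕ :=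
  sSup {r : ℕ | ∃ p : ℕ, p.Prime ∧ r = pRank G p}

/-!
Call a zero-sum sequence over `G₀` good if it is a union of atoms of cross number `1`, and call an
atom large if its cross number exceeds `1`; since `G₀` is minimal, every large atom involves every
element of `G₀`. A good atom `W` has at most `exp G` terms, so if all distances are at least
`exp G - 2`, comparing lengths of `R + W` shows that `R` is good whenever `R + W` and `W` are.
Therefore large atoms lie outside the lattice `L₁` spanned by the good atoms inside the lattice `L`
of all relations on `G₀`, while relations not involving all of `G₀` lie in `L₁`. This makes `L / L₁`
a nontrivial cyclic group, and reducing modulo a prime `p` dividing its order yields `|G₀| - 1`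
elements of `G` that are independent modulo `p`, hence `|G₀| ≤ r(G) + 1`.

On the other hand, a basis of `(ℤ / p)^r` together with its sum shows `max Δ*(G) ≥ r(G) - 1`. So
`|G₀| ≤ min Δ(G₀) + 2`, which forces the large atoms to come in pairs `U, V` whose union is the
product of all `g ^ ord g`. For odd `exp G`, each `g` has multiplicity above `ord g / 2` in exactly
one of `U` and `V`. Comparing lengths of `U + U` and `V + V`, one of them, say `U`, has only one
such element `s`. If some good atom `A ≠ z ^ ord z` avoided `s`, then replacing `U` by
`U + z ^ ord z - A` for a suitable `z` would yield a large atom of the same kind with larger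
multiplicity at `z`, which cannot go on forever. So all atoms over `G₀ \ {s}` are of the form
`g ^ ord g`, that is, `G₀ \ {s}` is independent.
-/

section Factorizations

variable {G : Type*} [AddCommGroup G] {G₀ G₁ : Set G} {A B C : Multiset G} {x y : ℕ}

namespace IsZeroSumSeq

lemma add (hA : IsZeroSumSeq G₀ A) (hB : IsZeroSumSeq G₀ B) : IsZeroSumSeq G₀ (A + B) := by
  refine ⟨fun x hx => ?_, by rw [sum_add, hA.2, hB.2, add_zero]⟩
  exact (mem_add.1 hx).elim (hA.1 x) (hB.1 x)

lemma of_add_left (hA : A.sum = 0) (h : IsZeroSumSeq G₀ (A + B)) : IsZeroSumSeq G₀ B :=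
  ⟨fun x hx => h.1 x (mem_add.2 (Or.inr hx)), by simpa [hA] using h.2⟩

lemma of_le (hA : A.sum = 0) (h : IsZeroSumSeq G₀ B) (hAB : A ≤ B) : IsZeroSumSeq G₀ A :=
  ⟨fun x hx => h.1 x (mem_of_le hAB hx), hA⟩

lemma multiset_sum {l : Multiset (Multiset G)} (h : ∀ A ∈ l, IsZeroSumSeq G₀ A) :
    IsZeroSumSeq G₀ l.sum :=
  sum_induction _ l (fun _ _ => add) ⟨by simp, by simp⟩ h

end IsZeroSumSeq

lemma isAtomSeq_iff_forall_le :
    IsAtomSeq G₀ A ↔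
      IsZeroSumSeq G₀ A ∧ A ≠ 0 ∧ ∀ B ≤ A, B.sum = 0 → B ≠ 0 → B = A := by
  refine ⟨fun ⟨hA, h0, h⟩ => ⟨hA, h0, fun B hBA hB hB0 => ?_⟩,
    fun ⟨hA, h0, h⟩ => ⟨hA, h0, ?_⟩⟩
  · obtain ⟨C, rfl⟩ := Multiset.le_iff_exists_add.1 hBA
    by_contra hne
    exact h B C (hA.of_le hB hBA) (hA.of_add_left hB) hB0 (by simpa using Ne.symm hne) rfl
  · rintro B C hB - hB0 hC0 rfl
    exact hC0 (add_eq_left.1 (h B (Multiset.le_add_right _ _) hB.2 hB0).symm)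

namespace IsAtomSeq

lemma eq_of_le (hA : IsAtomSeq G₀ A) (hB : B.sum = 0) (hB0 : B ≠ 0) (hBA : B ≤ A) : B = A :=
  (isAtomSeq_iff_forall_le.1 hA).2.2 B hBA hB hB0

lemma of_forall_mem (hA : IsAtomSeq G₀ A) (h : ∀ x ∈ A, x ∈ G₁) : IsAtomSeq G₁ A :=
  isAtomSeq_iff_forall_le.2
    ⟨⟨h, hA.1.2⟩, hA.2.1, fun _ hBA hB hB0 => hA.eq_of_le hB hB0 hBA⟩

lemma one_mem_lengthSet (hA : IsAtomSeq G₀ A) : 1 ∈ LengthSet G₀ A :=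
  ⟨{A}, by simp, by simpa using hA, by simp⟩

end IsAtomSeq

lemma IsZeroSumSeq.exists_mem_lengthSet (hB : IsZeroSumSeq G₀ B) :
    ∃ k, k ∈ LengthSet G₀ B := by
  induction h : card B using Nat.strong_induction_on generalizing B with
  | _ n ih =>
    by_cases h0 : B = 0
    · exact ⟨0, 0, by simp, by simp, by simp [h0]⟩
    by_cases hB_atom : IsAtomSeq G₀ B
    · exact ⟨1, hB_atom.one_mem_lengthSet⟩
    obtain ⟨A, C, hA, hC, hA0, hC0, rfl⟩ : ∃ A C, IsZeroSumSeq G₀ A ∧ IsZeroSumSeq G₀ C ∧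
        A ≠ 0 ∧ C ≠ 0 ∧ B = A + C := by
      by_contra! hsplit
      exact hB_atom ⟨hB, h0, hsplit⟩
    have hA_pos := card_pos.2 hA0
    have hC_pos := card_pos.2 hC0
    rw [card_add] at h
    obtain ⟨j, l, -, hl, rfl⟩ := ih _ (by omega) hA rfl
    obtain ⟨k, m, -, hm, rfl⟩ := ih _ (by omega) hC rfl
    exact ⟨_, l + m, rfl, fun X hX => (mem_add.1 hX).elim (hl X) (hm X), sum_add l m⟩

lemma isAtomSeq_of_one_mem_lengthSet (h : 1 ∈ LengthSet G₀ A) : IsAtomSeq G₀ A := by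
  obtain ⟨l, hl_card, hl, rfl⟩ := h
  obtain ⟨a, rfl⟩ := card_eq_one.1 hl_card
  simpa using hl

namespace LengthSet

lemma isZeroSumSeq (hx : x ∈ LengthSet G₀ B) : IsZeroSumSeq G₀ B := by
  obtain ⟨l, -, hl, rfl⟩ := hx
  exact .multiset_sum fun A hA => (hl A hA).1

lemma add (hx : x ∈ LengthSet G₀ A) (hy : y ∈ LengthSet G₀ B) :
    x + y ∈ LengthSet G₀ (A + B) := by
  obtain ⟨l, rfl, hl, rfl⟩ := hx
  obtain ⟨m, rfl, hm, rfl⟩ := hy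
  exact ⟨l + m, card_add l m, fun X hX => (mem_add.1 hX).elim (hl X) (hm X), sum_add l m⟩

lemma pos (hx : x ∈ LengthSet G₀ B) (hB : B ≠ 0) : 0 < x := by
  obtain ⟨l, rfl, -, rfl⟩ := hx
  refine card_pos.2 ?_
  rintro rfl
  exact hB sum_zero

lemma ne_zero (hx : x ∈ LengthSet G₀ B) (h0 : 0 < x) : B ≠ 0 := by
  obtain ⟨l, rfl, hl, rfl⟩ := hx
  obtain ⟨A, hA⟩ := card_pos_iff_exists_mem.1 h0
  intro hsum
  exact (hl A hA).2.1 (le_zero.1 (hsum ▸ le_sum_of_mem hA))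

end LengthSet

lemma exists_mem_deltaSet_le (hx : x ∈ LengthSet G₀ B) (hy : y ∈ LengthSet G₀ B)
    (hxy : x < y) : ∃ d ∈ DeltaSet G₀, x + d ≤ y := by
  classical
  have hnext : ∃ z, z ∈ LengthSet G₀ B ∧ x < z := ⟨y, hy, hxy⟩
  obtain ⟨hz, hxz⟩ := Nat.find_spec hnext
  have hzy := Nat.find_min' hnext ⟨hy, hxy⟩
  refine ⟨Nat.find hnext - x, ⟨B, LengthSet.isZeroSumSeq hx, LengthSet.ne_zero hy (by omega),
    x, hx, _, hz, hxz, rfl, fun w hw ⟨hxw, hwz⟩ => ?_⟩, by omega⟩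
  exact Nat.find_min hnext hwz ⟨hw, hxw⟩

lemma eq_of_mem_lengthSet_of_deltaSet_eq_empty (h : DeltaSet G₀ = ∅)
    (hx : x ∈ LengthSet G₀ B) (hy : y ∈ LengthSet G₀ B) : x = y := by
  wlog hxy : x < y generalizing x y
  · by_contra hne
    exact hne (this hy hx (by omega)).symm
  obtain ⟨d, hd, -⟩ := exists_mem_deltaSet_le hx hy hxy
  simp [h] at hd

lemma add_sInf_deltaSet_le (hx : x ∈ LengthSet G₀ B) (hy : y ∈ LengthSet G₀ B) (hxy : x < y) :
    x + sInf (DeltaSet G₀) ≤ y := by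
  obtain ⟨d, hd, hle⟩ := exists_mem_deltaSet_le hx hy hxy
  have := Nat.sInf_le hd
  omega

end Factorizations

section CrossNumber

variable {G : Type*} [AddCommGroup G]

lemma crossNumber_add (A B : Multiset G) :
    crossNumber (A + B) = crossNumber A + crossNumber B := by
  simp [crossNumber]

lemma crossNumber_nsmul (k : ℕ) (A : Multiset G) : crossNumber (k • A) = k * crossNumber A := by
  simp [crossNumber, map_nsmul, sum_nsmul]

lemma crossNumber_sum (l : Multiset (Multiset G)) :
    crossNumber l.sum = (l.map crossNumber).sum :=
  map_multiset_sum
    ({ toFun := crossNumber, map_zero' := by simp [crossNumber], map_add' := crossNumber_add } :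
      Multiset G →+ ℚ) l

lemma crossNumber_sum_eq_card {l : Multiset (Multiset G)} (h : ∀ A ∈ l, crossNumber A = 1) :
    crossNumber l.sum = card l := by
  rw [crossNumber_sum, map_congr rfl h]
  simp

lemma card_le_crossNumber_sum {l : Multiset (Multiset G)} (h : ∀ A ∈ l, 1 ≤ crossNumber A) :
    (card l : ℚ) ≤ crossNumber l.sum := by
  rw [crossNumber_sum]
  simpa using card_nsmul_le_sum (s := l.map crossNumber) (a := 1) (by simpa using h)

lemma forall_crossNumber_eq_one_of_sum_le_card {l : Multiset (Multiset G)}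
    (h : ∀ A ∈ l, 1 ≤ crossNumber A) (hle : crossNumber l.sum ≤ card l) :
    ∀ A ∈ l, crossNumber A = 1 := by
  intro A hA
  obtain ⟨m, rfl⟩ := exists_cons_of_mem hA
  have hm := card_le_crossNumber_sum fun B hB => h B (mem_cons_of_mem hB)
  rw [sum_cons, crossNumber_add, card_cons, Nat.cast_add_one] at hle
  exact le_antisymm (by linarith) (h A hA)

lemma card_le_exponent_mul_crossNumber [Finite G] (A : Multiset G) :
    (card A : ℚ) ≤ AddMonoid.exponent G * crossNumber A := by
  have hterm : ∀ q ∈ A.map fun g : G => (AddMonoid.exponent G : ℚ) * (addOrderOf g : ℚ)⁻¹,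
      1 ≤ q := by
    simp only [mem_map, forall_exists_index, and_imp, forall_apply_eq_imp_iff₂]
    intro g _
    rw [← div_eq_mul_inv, one_le_div (by exact_mod_cast addOrderOf_pos g)]
    exact_mod_cast Nat.le_of_dvd AddMonoid.ExponentExists.of_finite.exponent_pos
      (AddMonoid.addOrder_dvd_exponent g)
  simpa [crossNumber, sum_map_mul_left] using card_nsmul_le_sum hterm

end CrossNumber

section CrossOneAtoms

variable {G : Type*} [AddCommGroup G] {G₀ : Set G} {A B U : Multiset G} {g : G}

/-- An atom over `G₀` of cross number `1`. -/
def IsCrossOneAtom (G₀ : Set G) (A : Multiset G) : Prop :=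
  IsAtomSeq G₀ A ∧ crossNumber A = 1

/-- An atom over `G₀` of cross number larger than `1`. Over an LCN-set these are the atoms that
obstruct half-factoriality. -/
def IsLargeAtom (G₀ : Set G) (A : Multiset G) : Prop :=
  IsAtomSeq G₀ A ∧ 1 < crossNumber A

/-- The zero-sum sequences over `G₀` that are unions of atoms of cross number `1`. -/
def crossOneMonoid (G₀ : Set G) : AddSubmonoid (Multiset G) :=
  .closure {A | IsCrossOneAtom G₀ A}

lemma IsCrossOneAtom.mem_crossOneMonoid (hA : IsCrossOneAtom G₀ A) : A ∈ crossOneMonoid G₀ :=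
  AddSubmonoid.subset_closure hA

lemma mem_crossOneMonoid_iff :
    B ∈ crossOneMonoid G₀ ↔
      ∃ l : Multiset (Multiset G), (∀ A ∈ l, IsCrossOneAtom G₀ A) ∧ l.sum = B := by
  refine ⟨AddSubmonoid.exists_multiset_of_mem_closure, ?_⟩
  rintro ⟨l, hl, rfl⟩
  exact multiset_sum_mem l fun A hA => (hl A hA).mem_crossOneMonoid

lemma exists_mem_lengthSet_eq_crossNumber (hB : B ∈ crossOneMonoid G₀) :
    ∃ k ∈ LengthSet G₀ B, (k : ℚ) = crossNumber B := by
  obtain ⟨l, hl, rfl⟩ := mem_crossOneMonoid_iff.1 hB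
  exact ⟨card l, ⟨l, rfl, fun A hA => (hl A hA).1, rfl⟩,
    (crossNumber_sum_eq_card fun A hA => (hl A hA).2).symm⟩

lemma isZeroSumSeq_of_mem_crossOneMonoid (hB : B ∈ crossOneMonoid G₀) : IsZeroSumSeq G₀ B :=
  have ⟨_, hk, _⟩ := exists_mem_lengthSet_eq_crossNumber hB
  LengthSet.isZeroSumSeq hk

lemma IsLargeAtom.notMem_crossOneMonoid (hU : IsLargeAtom G₀ U) : U ∉ crossOneMonoid G₀ := by
  rw [mem_crossOneMonoid_iff]
  rintro ⟨l, hl, rfl⟩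
  have hl0 : l ≠ 0 := by
    rintro rfl
    exact hU.1.2.1 sum_zero
  obtain ⟨A, hA⟩ := exists_mem_of_ne_zero hl0
  have hAU := hU.1.eq_of_le (hl A hA).1.1.2 (hl A hA).1.2.1 (le_sum_of_mem hA)
  exact hU.2.ne' (hAU ▸ (hl A hA).2)

namespace IsLCNSet

lemma isLargeAtom (h : IsLCNSet G₀) (hU : IsAtomSeq G₀ U) (hU_notMem : U ∉ crossOneMonoid G₀) :
    IsLargeAtom G₀ U :=
  ⟨hU, (h U hU).lt_of_ne fun hk =>
    hU_notMem (IsCrossOneAtom.mem_crossOneMonoid ⟨hU, hk.symm⟩)⟩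

lemma lt_crossNumber (h : IsLCNSet G₀) (hB : B ∉ crossOneMonoid G₀) {k : ℕ}
    (hk : k ∈ LengthSet G₀ B) : (k : ℚ) < crossNumber B := by
  obtain ⟨l, rfl, hl, rfl⟩ := hk
  by_contra! hle
  have hone := forall_crossNumber_eq_one_of_sum_le_card (fun A hA => h A (hl A hA)) hle
  exact hB (mem_crossOneMonoid_iff.2 ⟨l, fun A hA => ⟨hl A hA, hone A hA⟩, rfl⟩)

lemma exists_isLargeAtom (h : IsLCNSet G₀) (hΔ : (DeltaSet G₀).Nonempty) :
    ∃ U, IsLargeAtom G₀ U := by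
  by_contra! hno
  have hone : ∀ A, IsAtomSeq G₀ A → crossNumber A = 1 := fun A hA =>
    (h A hA).antisymm' (not_lt.1 fun hlt => hno A ⟨hA, hlt⟩)
  obtain ⟨_, B, -, -, _, ⟨l, rfl, hl, hlB⟩, _, ⟨m, rfl, hm, hmB⟩, hlt, -⟩ := hΔ
  have hl_card := crossNumber_sum_eq_card fun A hA => hone A (hl A hA)
  have hm_card := crossNumber_sum_eq_card fun A hA => hone A (hm A hA)
  rw [hlB] at hl_card
  rw [hmB, hl_card, Nat.cast_inj] at hm_card
  exact hlt.ne hm_card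

end IsLCNSet

/-- The atom `g^{ord g}` consisting of `ord g` copies of `g`. -/
noncomputable def trivialAtom (g : G) : Multiset G := replicate (addOrderOf g) g

lemma sum_trivialAtom (g : G) : (trivialAtom g).sum = 0 := by
  rw [trivialAtom, sum_replicate, addOrderOf_nsmul_eq_zero]

lemma count_trivialAtom [DecidableEq G] (x g : G) :
    (trivialAtom g).count x = if g = x then addOrderOf g else 0 :=
  count_replicate x g _

lemma trivialAtom_le_iff [DecidableEq G] : trivialAtom g ≤ A ↔ addOrderOf g ≤ A.count g :=
  le_count_iff_replicate_le.symm

/-- The union of the atoms `x^{ord x}` for `x ∈ X`. -/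
noncomputable def trivialSum (X : Finset G) : Multiset G := ∑ x ∈ X, trivialAtom x

lemma count_trivialSum [DecidableEq G] (X : Finset G) (x : G) :
    (trivialSum X).count x = if x ∈ X then addOrderOf x else 0 := by
  simp [trivialSum, count_sum', count_trivialAtom]

variable [Finite G]

lemma trivialAtom_ne_zero (g : G) : trivialAtom g ≠ 0 :=
  card_pos.1 (by simpa [trivialAtom] using addOrderOf_pos g)

lemma isCrossOneAtom_trivialAtom (hg : g ∈ G₀) : IsCrossOneAtom G₀ (trivialAtom g) := by
  refine ⟨isAtomSeq_iff_forall_le.2 ⟨⟨fun x hx => ?_, sum_trivialAtom g⟩,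
    trivialAtom_ne_zero g, fun B hB hB_sum hB0 => ?_⟩, ?_⟩
  · rwa [eq_of_mem_replicate hx]
  · obtain ⟨k, hk, rfl⟩ := le_replicate_iff.1 hB
    rw [sum_replicate] at hB_sum
    have hk_pos : 0 < k := by simpa using card_pos.2 hB0
    rw [trivialAtom, hk.antisymm (addOrderOf_le_of_nsmul_eq_zero hk_pos hB_sum)]
  · simp [trivialAtom, crossNumber, (addOrderOf_pos g).ne']

lemma trivialAtom_mem_crossOneMonoid (hg : g ∈ G₀) : trivialAtom g ∈ crossOneMonoid G₀ :=
  (isCrossOneAtom_trivialAtom hg).mem_crossOneMonoid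

lemma card_mem_lengthSet_trivialSum {X : Finset G} (hX : ↑X ⊆ G₀) :
    X.card ∈ LengthSet G₀ (trivialSum X) := by
  refine ⟨X.val.map trivialAtom, card_map _ _, ?_, rfl⟩
  simp only [mem_map, forall_exists_index, and_imp, forall_apply_eq_imp_iff₂]
  exact fun x hx => (isCrossOneAtom_trivialAtom (hX hx)).1

lemma crossNumber_trivialSum (X : Finset G) : crossNumber (trivialSum X) = X.card := by
  have hone : ∀ A ∈ X.val.map trivialAtom, crossNumber A = 1 := by
    simp only [mem_map, forall_exists_index, and_imp, forall_apply_eq_imp_iff₂]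
    exact fun x _ => (isCrossOneAtom_trivialAtom (Set.mem_univ x)).2
  rw [trivialSum, Finset.sum, crossNumber_sum_eq_card hone, card_map, Finset.card_val]

lemma trivialSum_mem_crossOneMonoid {X : Finset G} (hX : ↑X ⊆ G₀) :
    trivialSum X ∈ crossOneMonoid G₀ :=
  sum_mem fun _ hx => trivialAtom_mem_crossOneMonoid (hX hx)

lemma IsAtomSeq.count_lt_addOrderOf [DecidableEq G] (hA : IsAtomSeq G₀ A)
    (hne : A ≠ trivialAtom g) : A.count g < addOrderOf g := by
  by_contra! hle
  exact hne (hA.eq_of_le (sum_trivialAtom g) (trivialAtom_ne_zero g)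
    (trivialAtom_le_iff.2 hle)).symm

lemma IsLargeAtom.count_lt_addOrderOf [DecidableEq G] (hU : IsLargeAtom G₀ U) (g : G) :
    U.count g < addOrderOf g := by
  refine hU.1.count_lt_addOrderOf ?_
  rintro rfl
  exact hU.2.ne' (isCrossOneAtom_trivialAtom (Set.mem_univ g)).2

lemma mem_crossOneMonoid_of_addOrderOf_dvd [DecidableEq G] (hA : ∀ x ∈ A, x ∈ G₀)
    (hdvd : ∀ x ∈ A, addOrderOf x ∣ A.count x) : A ∈ crossOneMonoid G₀ := by
  rw [← toFinset_sum_count_nsmul_eq A]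
  refine sum_mem fun x hx => ?_
  rw [mem_toFinset] at hx
  obtain ⟨k, hk⟩ := hdvd x hx
  rw [hk, nsmul_singleton, mul_comm, ← nsmul_replicate]
  exact nsmul_mem (trivialAtom_mem_crossOneMonoid (hA x hx)) k

lemma exponent_nsmul_mem_crossOneMonoid (hA : ∀ x ∈ A, x ∈ G₀) :
    AddMonoid.exponent G • A ∈ crossOneMonoid G₀ := by
  classical
  refine mem_crossOneMonoid_of_addOrderOf_dvd (fun x hx => hA x (mem_of_mem_nsmul hx))
    fun x _ => ?_
  rw [count_nsmul]
  exact (AddMonoid.addOrder_dvd_exponent x).mul_right _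

-- The `exp G`-th multiple of an atom `A` has the two lengths `exp G` and `exp G * k(A)`.
lemma IsAtomSeq.crossNumber_eq_one_of_deltaSet_eq_empty (h : DeltaSet G₀ = ∅)
    (hA : IsAtomSeq G₀ A) : crossNumber A = 1 := by
  obtain ⟨k, hk, hk_cross⟩ :=
    exists_mem_lengthSet_eq_crossNumber (exponent_nsmul_mem_crossOneMonoid hA.1.1)
  have hexp : AddMonoid.exponent G ∈ LengthSet G₀ (AddMonoid.exponent G • A) :=
    ⟨replicate (AddMonoid.exponent G) A, card_replicate _ _,
      fun X hX => eq_of_mem_replicate hX ▸ hA, sum_replicate _ _⟩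
  rw [eq_of_mem_lengthSet_of_deltaSet_eq_empty h hk hexp, crossNumber_nsmul] at hk_cross
  have hexp0 : (AddMonoid.exponent G : ℚ) ≠ 0 :=
    Nat.cast_ne_zero.2 AddMonoid.exponent_ne_zero_of_finite
  exact mul_left_cancel₀ hexp0 (by linarith)

namespace IsMinNonHalfFactorial

lemma mem_crossOneMonoid_of_notMem (h : IsMinNonHalfFactorial G₀) (hB : IsZeroSumSeq G₀ B)
    (hg : g ∈ G₀) (hgB : g ∉ B) : B ∈ crossOneMonoid G₀ := by
  have hB' : IsZeroSumSeq (G₀ \ {g}) B :=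
    ⟨fun x hx => ⟨hB.1 x hx, by rintro rfl; exact hgB hx⟩, hB.2⟩
  obtain ⟨_, l, rfl, hl, rfl⟩ := hB'.exists_mem_lengthSet
  refine mem_crossOneMonoid_iff.2 ⟨l, fun A hA => ⟨?_, ?_⟩, rfl⟩
  · exact (hl A hA).of_forall_mem fun x hx => ((hl A hA).1.1 x hx).1
  · exact (hl A hA).crossNumber_eq_one_of_deltaSet_eq_empty
      (h.2 _ (Set.sdiff_singleton_ssubset.2 hg))

lemma mem_of_isLargeAtom (h : IsMinNonHalfFactorial G₀) (hU : IsLargeAtom G₀ U)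
    (hg : g ∈ G₀) : g ∈ U := by
  by_contra hgU
  exact hU.notMem_crossOneMonoid (h.mem_crossOneMonoid_of_notMem hU.1.1 hg hgU)

end IsMinNonHalfFactorial

end CrossOneAtoms

section Wide

variable {G : Type*} [AddCommGroup G]

/-- The sets studied here: minimal non-half-factorial LCN-sets all of whose distances are at least
`exp G - 2`. -/
structure IsWideLCNSet (G₀ : Set G) : Prop where
  minimal : IsMinNonHalfFactorial G₀
  lcn : IsLCNSet G₀
  exponent_le : AddMonoid.exponent G ≤ sInf (DeltaSet G₀) + 2

/-- If no `A ∈ l` is contained in `R`, each needs an element of `W` on top of `R`; `Y` collects one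
such element for every `A`. -/
lemma exists_le_card_eq_of_forall_not_le {α : Type*} [DecidableEq α] [Nonempty α]
    {l : Multiset (Multiset α)} {R W : Multiset α} (hl : l.sum = R + W) (h : ∀ A ∈ l, ¬A ≤ R) :
    ∃ Y ≤ W, card Y = card l ∧ ∀ y, Y.count y * (R.count y + 1) ≤ R.count y + W.count y := by
  have hexcess : ∀ A ∈ l, ∃ y, R.count y + 1 ≤ A.count y := fun A hA => by
    simpa [le_iff_count, Nat.succ_le_iff] using h A hA
  choose! excess h_excess using hexcess
  have hcount : ∀ y, (l.map excess).count y * (R.count y + 1) ≤ R.count y + W.count y := by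
    intro y
    set m := l.filter (y = excess ·)
    have hm_le : m.sum ≤ l.sum := by
      rw [← sum_filter_add_sum_filter_not (y = excess ·) (s := l)]
      exact Multiset.le_add_right _ _
    have hm : ∀ k ∈ m.map (count y), R.count y + 1 ≤ k := by
      simp only [mem_map, forall_exists_index, and_imp, forall_apply_eq_imp_iff₂]
      intro A hA
      obtain ⟨hAl, rfl⟩ := mem_filter.1 hA
      exact h_excess A hAl
    calc (l.map excess).count y * (R.count y + 1)
        = card (m.map (count y)) • (R.count y + 1) := by rw [count_map, card_map, smul_eq_mul]
      _ ≤ (m.map (count y)).sum := card_nsmul_le_sum hm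
      _ = m.sum.count y := (map_multiset_sum (countAddMonoidHom y) m).symm
      _ ≤ l.sum.count y := count_le_of_le y hm_le
      _ = R.count y + W.count y := by rw [hl, count_add]
  refine ⟨l.map excess, le_iff_count.2 fun y => ?_, card_map _ _, hcount⟩
  rcases Nat.eq_zero_or_pos ((l.map excess).count y) with h0 | hpos
  · omega
  · nlinarith [hcount y]

namespace IsWideLCNSet

variable {G₀ : Set G} {R W : Multiset G} {l : Multiset (Multiset G)}

lemma exponent_add_length_le (h : IsWideLCNSet G₀) (hR : R ∉ crossOneMonoid G₀) {k : ℕ}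
    (hk : k ∈ LengthSet G₀ R) (hW : IsCrossOneAtom G₀ W) (hl : ∀ A ∈ l, IsCrossOneAtom G₀ A)
    (hl_sum : l.sum = R + W) : AddMonoid.exponent G + k ≤ card l + 1 := by
  have hcard : (card l : ℚ) = crossNumber R + 1 := by
    rw [← crossNumber_sum_eq_card fun A hA => (hl A hA).2, hl_sum, crossNumber_add, hW.2]
  have hlt : k + 1 < card l := by
    have := h.lcn.lt_crossNumber hR hk
    exact_mod_cast (by linarith : (k + 1 : ℚ) < card l)
  have := add_sInf_deltaSet_le (LengthSet.add hk hW.1.one_mem_lengthSet)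
    ⟨l, rfl, fun A hA => (hl A hA).1, hl_sum⟩ hlt
  have := h.exponent_le
  omega

variable [Finite G]

lemma mem_of_forall_not_le (h : IsWideLCNSet G₀) (hR : IsZeroSumSeq G₀ R)
    (hW : IsCrossOneAtom G₀ W) (hl : ∀ A ∈ l, IsCrossOneAtom G₀ A) (hl_sum : l.sum = R + W)
    (hlR : ∀ A ∈ l, ¬A ≤ R) : R ∈ crossOneMonoid G₀ := by
  classical
  by_contra hR_notMem
  obtain ⟨k, hk⟩ := hR.exists_mem_lengthSet
  have hk_pos := LengthSet.pos hk (by rintro rfl; exact hR_notMem (zero_mem _))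
  have hcard_l := h.exponent_add_length_le hR_notMem hk hW hl hl_sum
  obtain ⟨Y, hYW, hY_card, hY_count⟩ := exists_le_card_eq_of_forall_not_le hl_sum hlR
  have hW_card : card W ≤ AddMonoid.exponent G := by
    have := card_le_exponent_mul_crossNumber W
    rw [hW.2, mul_one] at this
    exact_mod_cast this
  have := card_le_card hYW
  obtain rfl : Y = W := eq_of_le_of_card_le hYW (by omega)
  obtain rfl : k = 1 := by omega
  have hR_large := h.lcn.isLargeAtom (isAtomSeq_of_one_mem_lengthSet hk) hR_notMem
  have hYR : Y ≤ R := le_iff_count.2 fun y => by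
    by_cases hy : y ∈ Y
    · have := count_pos.2 (h.minimal.mem_of_isLargeAtom hR_large (hW.1.1.1 y hy))
      nlinarith [hY_count y]
    · simp [count_eq_zero_of_notMem hy]
  rw [← hR_large.1.eq_of_le hW.1.1.2 hW.1.2.1 hYR] at hR_notMem
  exact hR_notMem hW.mem_crossOneMonoid

lemma mem_of_sum_eq_add (h : IsWideLCNSet G₀) (hR : IsZeroSumSeq G₀ R)
    (hW : IsCrossOneAtom G₀ W) (hl : ∀ A ∈ l, IsCrossOneAtom G₀ A) (hl_sum : l.sum = R + W) :
    R ∈ crossOneMonoid G₀ := by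
  induction hn : card l generalizing l R with
  | zero =>
    obtain rfl := card_eq_zero.1 hn
    rw [(add_eq_zero.1 hl_sum.symm).1]
    exact zero_mem _
  | succ n ih =>
    by_cases hlR : ∀ A ∈ l, ¬A ≤ R
    · exact h.mem_of_forall_not_le hR hW hl hl_sum hlR
    push Not at hlR
    obtain ⟨A, hA, hAR⟩ := hlR
    obtain ⟨R', rfl⟩ := Multiset.le_iff_exists_add.1 hAR
    obtain ⟨m, rfl⟩ := exists_cons_of_mem hA
    rw [sum_cons, add_assoc] at hl_sum
    refine add_mem (hl A hA).mem_crossOneMonoid (ih (hR.of_add_left (hl A hA).1.1.2)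
      (fun B hB => hl B (mem_cons_of_mem hB)) (add_left_cancel hl_sum) ?_)
    simpa using hn

lemma mem_of_add_mem (h : IsWideLCNSet G₀) (hR : IsZeroSumSeq G₀ R)
    (hW : W ∈ crossOneMonoid G₀) (hRW : R + W ∈ crossOneMonoid G₀) : R ∈ crossOneMonoid G₀ := by
  induction hW using AddSubmonoid.closure_induction generalizing R with
  | mem W hW =>
    obtain ⟨l, hl, hl_sum⟩ := mem_crossOneMonoid_iff.1 hRW
    exact h.mem_of_sum_eq_add hR hW hl hl_sum
  | zero => rwa [add_zero] at hRW
  | add V W hV _ ihV ihW =>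
    have hV_zero := isZeroSumSeq_of_mem_crossOneMonoid hV
    exact ihV hR (ihW (hR.add hV_zero) (by rwa [add_assoc]))

end IsWideLCNSet

end Wide

section Rank

variable {G : Type*} [AddCommGroup G]

lemma card_le_pRank [Finite G] {ι : Type*} [Fintype ι] {p : ℕ} (hp : p.Prime)
    (φ : (ι → ℤ) →+ G) (hφ : ∀ c, φ c = 0 → ∀ i, (p : ℤ) ∣ c i) :
    Fintype.card ι ≤ pRank G p := by
  have : NeZero p := ⟨hp.ne_zero⟩
  let reduction : (ι → ℤ) →+ (ι → ZMod p) := (Int.castAddHom (ZMod p)).compLeft ι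
  have h_ker : φ.rangeRestrict.ker ≤ reduction.ker := fun c hc => by
    rw [AddMonoidHom.ker_rangeRestrict] at hc
    ext i
    exact (ZMod.intCast_zmod_eq_zero_iff_dvd _ p).2 (hφ c hc i)
  let ψ : φ.range →+ (ι → ZMod p) :=
    φ.rangeRestrict.liftOfSurjective φ.rangeRestrict_surjective ⟨reduction, h_ker⟩
  have hψ (c : ι → ℤ) : ψ (φ.rangeRestrict c) = reduction c :=
    AddMonoidHom.liftOfRightInverse_comp_apply _ _ _ ⟨reduction, h_ker⟩ c
  have hψ_surj : Function.Surjective ψ := fun b => by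
    refine ⟨φ.rangeRestrict fun i => (b i).val, ?_⟩
    rw [hψ]
    ext i
    simp [reduction]
  have h_range_le : (nsmulAddMonoidHom (α := φ.range) p).range ≤ ψ.ker := by
    rintro _ ⟨b, rfl⟩
    ext i
    simp
  have h_index : ψ.ker.index = p ^ Fintype.card ι := by
    rw [AddSubgroup.index_ker, AddMonoidHom.range_eq_top.2 hψ_surj,
      AddSubgroup.card_top, Nat.card_fun, Nat.card_zmod, Nat.card_eq_fintype_card]
  have h_dvd := AddSubgroup.index_dvd_of_le h_range_le
  rw [h_index, AddSubgroup.index_range] at h_dvd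
  have h_card : Nat.card (nsmulAddMonoidHom (α := φ.range) p).ker ≤
      Nat.card {x : G // p • x = 0} :=
    Nat.card_le_card_of_injective
      (fun y => ⟨(y : φ.range), congrArg Subtype.val (AddMonoidHom.mem_ker.1 y.2)⟩)
      fun _ _ h => Subtype.ext (Subtype.ext (Subtype.mk.inj h))
  exact Nat.le_log_of_pow_le hp.one_lt ((Nat.le_of_dvd Nat.card_pos h_dvd).trans h_card)

lemma exists_mem_forall_dvd_apply {ι : Type*} (L : AddSubgroup (ι → ℤ)) (i : ι) :
    ∃ v ∈ L, ∀ f ∈ L, v i ∣ f i := by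
  obtain ⟨a, ha⟩ := Int.subgroup_cyclic (L.map (Pi.evalAddMonoidHom (fun _ : ι => ℤ) i))
  rw [← AddSubgroup.zmultiples_eq_closure] at ha
  obtain ⟨v, hv, rfl⟩ := ha.symm ▸ AddSubgroup.mem_zmultiples a
  exact ⟨v, hv, fun f hf =>
    Int.mem_zmultiples_iff.1 (ha ▸ AddSubgroup.mem_map_of_mem _ hf)⟩

-- By `hker`, the quotient `L / L₁` is cyclic, generated by the class of any `v i ∈ L` whose `i`-th
-- coordinate generates the `i`-th projection of `L`. So with `δ i = v i i` and `p` dividing the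
-- order of `L / L₁`, the divisibility `p * δ i ∣ f i` means `f ∈ p • L + L₁` for every `i`.
lemma exists_prime_dvd_apply_of_lt {ι : Type*} {L₁ L : AddSubgroup (ι → ℤ)} (hlt : L₁ < L)
    (hker : ∀ f ∈ L, ∀ i, f i = 0 → f ∈ L₁) :
    ∃ p : ℕ, p.Prime ∧ ∃ δ : ι → ℤ, (∀ f ∈ L, ∀ i, δ i ∣ f i) ∧
      ∀ f ∈ L, ∀ i j, p * δ i ∣ f i → p * δ j ∣ f j := by
  choose v hvL hv using exists_mem_forall_dvd_apply L
  let π := QuotientAddGroup.mk' L₁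
  have hsub {f : ι → ℤ} (hf : f ∈ L) {i : ι} {k : ℤ} (hk : f i = k * v i i) :
      π f = k • π (v i) := by
    rw [← map_zsmul, ← sub_eq_zero, ← _root_.map_sub]
    refine (QuotientAddGroup.eq_zero_iff _).2
      (hker _ (sub_mem hf (zsmul_mem (hvL i) k)) i ?_)
    simp [hk]
  have hspan (i : ι) : AddSubgroup.zmultiples (π (v i)) = L.map π := by
    refine le_antisymm (AddSubgroup.zmultiples_le_of_mem (AddSubgroup.mem_map_of_mem _ (hvL i))) ?_
    rintro _ ⟨f, hf, rfl⟩
    obtain ⟨k, hk⟩ := hv i f hf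
    exact ⟨k, (hsub hf (hk.trans (mul_comm _ _))).symm⟩
  have hcard : Nat.card (L.map π) ≠ 1 := fun h => by
    rw [AddSubgroup.card_eq_one, AddSubgroup.map_eq_bot_iff, QuotientAddGroup.ker_mk'] at h
    exact hlt.not_ge h
  obtain ⟨p, hp, hp_dvd⟩ := Nat.exists_prime_and_dvd hcard
  have hdvd_iff {f : ι → ℤ} (hf : f ∈ L) (i : ι) :
      p * v i i ∣ f i ↔ ∃ g ∈ L, π f = (p : ℤ) • π g := by
    constructor
    · rintro ⟨m, hm⟩
      refine ⟨m • v i, zsmul_mem (hvL i) m, ?_⟩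
      rw [map_zsmul, smul_smul]
      exact hsub hf (by rw [hm]; ring)
    · rintro ⟨g, hg, hfg⟩
      obtain ⟨k, hk⟩ := hv i f hf
      obtain ⟨m, hm⟩ := hv i g hg
      rw [hsub hf (hk.trans (mul_comm _ _)), hsub hg (hm.trans (mul_comm _ _)), smul_smul,
        ← sub_eq_zero, ← sub_smul, ← addOrderOf_dvd_iff_zsmul_eq_zero, ← Nat.card_zmultiples,
        hspan] at hfg
      have hpk : (p : ℤ) ∣ k :=
        (dvd_sub_left (dvd_mul_right _ m)).1 ((Int.natCast_dvd_natCast.2 hp_dvd).trans hfg)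
      rw [hk, mul_comm]
      exact mul_dvd_mul_left _ hpk
  exact ⟨p, hp, fun i => v i i, fun f hf i => hv i f hf, fun f hf i j h =>
    (hdvd_iff hf j).2 ((hdvd_iff hf i).1 h)⟩

lemma exists_isZeroSumSeq_of_relation [Finite G] [DecidableEq G] {F : Finset G} {f : F → ℤ}
    (hf : ∑ x, f x • (x : G) = 0) :
    ∃ S, IsZeroSumSeq (F : Set G) S ∧
      ∀ x : F, (S.count (x : G) : ℤ) = f x + |f x| * addOrderOf (x : G) := by
  have hnonneg (x : F) : 0 ≤ f x + |f x| * addOrderOf (x : G) := by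
    have := neg_abs_le (f x)
    have : |f x| * 1 ≤ |f x| * addOrderOf (x : G) :=
      mul_le_mul_of_nonneg_left (by exact_mod_cast addOrderOf_pos (x : G)) (abs_nonneg _)
    linarith
  refine ⟨∑ x : F, replicate (f x + |f x| * addOrderOf (x : G)).toNat (x : G),
    ⟨fun y hy => ?_, ?_⟩, fun x => ?_⟩
  · obtain ⟨x, -, hx⟩ := Multiset.mem_sum.1 hy
    rw [eq_of_mem_replicate hx]
    exact x.2
  · rw [← coe_sumAddMonoidHom, _root_.map_sum, ← hf]
    refine Finset.sum_congr rfl fun x _ => ?_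
    rw [coe_sumAddMonoidHom, sum_replicate, ← natCast_zsmul, Int.toNat_of_nonneg (hnonneg x),
      add_smul, mul_smul, natCast_zsmul, addOrderOf_nsmul_eq_zero, smul_zero, add_zero]
  · simp [count_sum', count_replicate, hnonneg x]

lemma isIndependentSet_of_forall_exists_eq_trivialAtom [Finite G] {E : Set G} (h0 : (0 : G) ∉ E)
    (hE : ∀ A, IsAtomSeq E A → ∃ g, A = trivialAtom g) : IsIndependentSet E := by
  classical
  refine ⟨h0, fun F hF f hf e he => ?_⟩
  rw [← Finset.sum_coe_sort F fun x => f x • x] at hf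
  obtain ⟨S, hS, hS_count⟩ := exists_isZeroSumSeq_of_relation (f := fun x : F => f x) hf
  obtain ⟨_, l, rfl, hl, rfl⟩ :=
    IsZeroSumSeq.exists_mem_lengthSet (G₀ := E) ⟨fun x hx => hF (hS.1 x hx), hS.2⟩
  have hdvd : addOrderOf e ∣ l.sum.count e := by
    rw [← coe_countAddMonoidHom, map_multiset_sum]
    refine dvd_sum fun k hk => ?_
    obtain ⟨A, hA, rfl⟩ := mem_map.1 hk
    obtain ⟨g, rfl⟩ := hE A (hl A hA)
    rw [coe_countAddMonoidHom, count_trivialAtom]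
    split_ifs with hge
    · rw [hge]
    · exact dvd_zero _
  have := hS_count ⟨e, he⟩
  rw [← addOrderOf_dvd_iff_zsmul_eq_zero, ← dvd_add_left (dvd_mul_left _ |f e|), ← this]
  exact_mod_cast hdvd

end Rank

section RelationLattices

/-- The vector of multiplicities of the elements of `F` in a multiset. -/
def countVec {α : Type*} [DecidableEq α] (F : Finset α) : Multiset α →+ (F → ℤ) where
  toFun A x := A.count (x : α)
  map_zero' := by ext; simp
  map_add' A B := by ext; simp

lemma eq_of_countVec_eq {α : Type*} [DecidableEq α] {F : Finset α} {A B : Multiset α}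
    (hA : ∀ x ∈ A, x ∈ F) (hB : ∀ x ∈ B, x ∈ F) (h : countVec F A = countVec F B) : A = B := by
  ext x
  by_cases hx : x ∈ F
  · exact Int.natCast_inj.1 (congrFun h ⟨x, hx⟩)
  · rw [count_eq_zero_of_notMem fun h => hx (hA x h),
      count_eq_zero_of_notMem fun h => hx (hB x h)]

variable {G : Type*} [AddCommGroup G]

/-- The lattice of integral relations between the elements of `F`. -/
def relationLattice (F : Finset G) : AddSubgroup (F → ℤ) :=
  (Fintype.linearCombination ℤ (Subtype.val : F → G)).toAddMonoidHom.ker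

lemma mem_relationLattice_iff {F : Finset G} {f : F → ℤ} :
    f ∈ relationLattice F ↔ ∑ x, f x • (x : G) = 0 := by
  rw [relationLattice, AddMonoidHom.mem_ker]
  rfl

variable [DecidableEq G]

/-- The sublattice of `relationLattice F` generated by the atoms over `F` of cross number `1`,
written as differences of members of `crossOneMonoid F`. -/
def crossOneLattice (F : Finset G) : AddSubgroup (F → ℤ) where
  carrier := {f | ∃ A ∈ crossOneMonoid (F : Set G), ∃ B ∈ crossOneMonoid (F : Set G),
    f = countVec F A - countVec F B}
  zero_mem' := ⟨0, zero_mem _, 0, zero_mem _, by simp⟩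
  add_mem' := by
    rintro _ _ ⟨A, hA, B, hB, rfl⟩ ⟨A', hA', B', hB', rfl⟩
    exact ⟨A + A', add_mem hA hA', B + B', add_mem hB hB', by
      rw [_root_.map_add, _root_.map_add]; abel⟩
  neg_mem' := by
    rintro _ ⟨A, hA, B, hB, rfl⟩
    exact ⟨B, hB, A, hA, neg_sub _ _⟩

variable {F : Finset G} {A B : Multiset G}

lemma countVec_mem_relationLattice (hA : IsZeroSumSeq (F : Set G) A) :
    countVec F A ∈ relationLattice F := by
  rw [mem_relationLattice_iff, ← hA.2]
  calc ∑ x : F, countVec F A x • (x : G) = ∑ x ∈ F, A.count x • x := by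
        rw [← Finset.sum_coe_sort F fun x => A.count x • x]
        simp [countVec]
    _ = A.sum := (Finset.sum_multiset_count_of_subset A F fun x hx =>
        hA.1 x (mem_toFinset.1 hx)).symm

namespace IsWideLCNSet

variable [Finite G] {U : Multiset G}

lemma countVec_notMem_crossOneLattice (h : IsWideLCNSet (F : Set G))
    (hU : IsLargeAtom (F : Set G) U) : countVec F U ∉ crossOneLattice F := by
  rintro ⟨A, hA, B, hB, hUAB⟩
  have hB_zero := isZeroSumSeq_of_mem_crossOneMonoid hB
  have hUB : U + B = A := by
    refine eq_of_countVec_eq (hU.1.1.add hB_zero).1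
      (isZeroSumSeq_of_mem_crossOneMonoid hA).1 ?_
    rw [_root_.map_add, hUAB, sub_add_cancel]
  exact hU.notMem_crossOneMonoid (h.mem_of_add_mem hU.1.1 hB (hUB ▸ hA))

lemma crossOneLattice_lt (h : IsWideLCNSet (F : Set G)) :
    crossOneLattice F < relationLattice F := by
  refine SetLike.lt_iff_le_and_exists.2 ⟨?_, ?_⟩
  · rintro _ ⟨A, hA, B, hB, rfl⟩
    exact sub_mem (countVec_mem_relationLattice (isZeroSumSeq_of_mem_crossOneMonoid hA))
      (countVec_mem_relationLattice (isZeroSumSeq_of_mem_crossOneMonoid hB))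
  · obtain ⟨U, hU⟩ := h.lcn.exists_isLargeAtom h.minimal.1
    exact ⟨_, countVec_mem_relationLattice hU.1.1, h.countVec_notMem_crossOneLattice hU⟩

lemma mem_crossOneLattice_of_apply_eq_zero (h : IsWideLCNSet (F : Set G)) {f : F → ℤ}
    (hf : f ∈ relationLattice F) {g : F} (hfg : f g = 0) : f ∈ crossOneLattice F := by
  obtain ⟨S, hS, hS_count⟩ := exists_isZeroSumSeq_of_relation (mem_relationLattice_iff.1 hf)
  have hgS : (g : G) ∉ S := count_eq_zero.1 (by simpa [hfg] using hS_count g)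
  refine ⟨S, h.minimal.mem_crossOneMonoid_of_notMem hS g.2 hgS,
    ∑ x : F, (f x).natAbs • trivialAtom (x : G),
    sum_mem fun x _ => nsmul_mem (trivialAtom_mem_crossOneMonoid x.2) _, ?_⟩
  ext x
  have h_trivial : ∑ y : F, (f y).natAbs * (trivialAtom (y : G)).count (x : G) =
      (f x).natAbs * addOrderOf (x : G) := by
    simp [count_trivialAtom]
  simp only [countVec, AddMonoidHom.coe_mk, ZeroHom.coe_mk, Pi.sub_apply, hS_count x,
    count_sum', count_nsmul, h_trivial]
  simp

end IsWideLCNSet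

end RelationLattices

theorem IsWideLCNSet.card_sub_one_le_pRank {G : Type*} [AddCommGroup G] [Finite G]
    {F : Finset G} (h : IsWideLCNSet (F : Set G)) :
    ∃ p : ℕ, p.Prime ∧ F.card - 1 ≤ pRank G p := by
  classical
  obtain ⟨p, hp, δ, hδ, hpδ⟩ := exists_prime_dvd_apply_of_lt h.crossOneLattice_lt
    fun f hf _ => h.mem_crossOneLattice_of_apply_eq_zero hf
  refine ⟨p, hp, ?_⟩
  have hδ_ne (x : F) : δ x ≠ 0 := fun h0 => by
    have := hδ _ (countVec_mem_relationLattice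
      (isCrossOneAtom_trivialAtom (G₀ := (F : Set G)) x.2).1.1) x
    rw [h0, zero_dvd_iff] at this
    simp [countVec, count_trivialAtom, (addOrderOf_pos (x : G)).ne'] at this
  obtain ⟨U, hU⟩ := h.lcn.exists_isLargeAtom h.minimal.1
  obtain ⟨g, hg⟩ := exists_mem_of_ne_zero hU.1.2.1
  let g₀ : F := ⟨g, hU.1.1.1 g hg⟩
  let φ : ({x : F // x ≠ g₀} → ℤ) →+ G :=
    (Fintype.linearCombination ℤ fun x : {x : F // x ≠ g₀} => δ x • (x : G)).toAddMonoidHom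
  have hφ (c) (hc : φ c = 0) (x) : (p : ℤ) ∣ c x := by
    let f : F → ℤ := fun x => if hx : x ≠ g₀ then c ⟨x, hx⟩ * δ x else 0
    have hf : f ∈ relationLattice F := by
      have hf_ne (x : {x : F // x ≠ g₀}) : f x = c x * δ x := dif_pos x.2
      rw [mem_relationLattice_iff, ← hc, Fintype.sum_eq_add_sum_subtype_ne _ g₀]
      simp only [hf_ne]
      simp [f, φ, Fintype.linearCombination_apply, mul_smul]
    have := hpδ f hf g₀ x (by simp [f])
    simp only [f, dif_pos x.2] at this
    exact Int.dvd_of_mul_dvd_mul_right (hδ_ne x) this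
  simpa using card_le_pRank hp φ hφ

section Tight

variable {G : Type*} [AddCommGroup G] {F X : Finset G} {A B U V : Multiset G} {s x z : G}

namespace IsWideLCNSet

variable [Finite G] {G₀ : Set G}

lemma mem_of_addOrderOf_dvd_count [DecidableEq G] (h : IsWideLCNSet G₀)
    (hB : IsZeroSumSeq G₀ B) (hx : x ∈ G₀) (hdvd : addOrderOf x ∣ B.count x) :
    B ∈ crossOneMonoid G₀ := by
  have h_split : replicate (B.count x) x + B.filter (x ≠ ·) = B := by
    rw [← filter_eq, filter_add_not]
  have h_copies : replicate (B.count x) x ∈ crossOneMonoid G₀ := by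
    obtain ⟨k, hk⟩ := hdvd
    rw [hk, mul_comm, ← nsmul_replicate]
    exact nsmul_mem (trivialAtom_mem_crossOneMonoid hx) k
  rw [← h_split]
  refine add_mem h_copies (h.minimal.mem_crossOneMonoid_of_notMem
    (IsZeroSumSeq.of_add_left (isZeroSumSeq_of_mem_crossOneMonoid h_copies).2 ?_) hx ?_)
  · rwa [h_split]
  · simp

lemma not_coprime_count_addOrderOf [DecidableEq G] (h : IsWideLCNSet G₀) (hU : IsLargeAtom G₀ U)
    (hA : A ∈ crossOneMonoid G₀) (hx : x ∈ G₀) : ¬(A.count x).Coprime (addOrderOf x) := by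
  intro hcop
  have : NeZero (addOrderOf x) := ⟨(addOrderOf_pos x).ne'⟩
  let t := (-(U.count x * (A.count x : ZMod (addOrderOf x))⁻¹)).val
  have ht : addOrderOf x ∣ (U + t • A).count x := by
    rw [← ZMod.natCast_eq_zero_iff, count_add, count_nsmul]
    push_cast
    rw [ZMod.natCast_zmod_val, neg_mul, mul_right_comm, mul_assoc,
      ZMod.coe_mul_inv_eq_one _ hcop, mul_one, add_neg_cancel]
  have htA := nsmul_mem hA t
  exact hU.notMem_crossOneMonoid (h.mem_of_add_mem hU.1.1 htA
    (h.mem_of_addOrderOf_dvd_count (hU.1.1.add (isZeroSumSeq_of_mem_crossOneMonoid htA)) hx ht))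

lemma exists_eq_trivialAtom_of_exponent_le_three (h : IsWideLCNSet G₀)
    (hodd : Odd (AddMonoid.exponent G)) (hexp : AddMonoid.exponent G ≤ 3)
    (hA : IsCrossOneAtom G₀ A) : ∃ g, A = trivialAtom g := by
  classical
  by_contra! hne
  obtain ⟨U, hU⟩ := h.lcn.exists_isLargeAtom h.minimal.1
  obtain ⟨x, hx⟩ := exists_mem_of_ne_zero hA.1.2.1
  have hpos := count_pos.2 hx
  have hlt := hA.1.count_lt_addOrderOf (hne x)
  have hdvd := AddMonoid.addOrder_dvd_exponent x
  have hle := Nat.le_of_dvd hodd.pos hdvd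
  obtain ⟨k, hk⟩ := hodd.of_dvd_nat hdvd
  have hord : addOrderOf x = 3 := by omega
  refine h.not_coprime_count_addOrderOf hU hA.mem_crossOneMonoid (hA.1.1.1 x hx) ?_
  rw [hord] at hlt ⊢
  exact (Nat.prime_three.coprime_iff_not_dvd.2 (Nat.not_dvd_of_pos_of_lt hpos hlt)).symm

end IsWideLCNSet

/-- A finite `IsWideLCNSet` with at most `min Δ(F) + 2` elements. -/
structure IsTightLCNSet (F : Finset G) : Prop extends IsWideLCNSet (F : Set G) where
  card_le : F.card ≤ sInf (DeltaSet (F : Set G)) + 2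

namespace IsTightLCNSet

variable [Finite G]

lemma exists_add_eq_trivialSum (h : IsTightLCNSet F) (hU : IsLargeAtom (F : Set G) U) :
    ∃ V, IsLargeAtom (F : Set G) V ∧ U + V = trivialSum F := by
  classical
  have hle : U ≤ trivialSum F := le_iff_count.2 fun x => by
    rw [count_trivialSum]
    split_ifs with hx
    · exact (hU.count_lt_addOrderOf x).le
    · rw [count_eq_zero_of_notMem fun hxU => hx (hU.1.1.1 x hxU)]
  obtain ⟨V, hV⟩ := Multiset.le_iff_exists_add.1 hle
  have hF := trivialSum_mem_crossOneMonoid (G₀ := (F : Set G)) subset_rfl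
  rw [hV] at hF
  have hV_zero := IsZeroSumSeq.of_add_left hU.1.1.2 (isZeroSumSeq_of_mem_crossOneMonoid hF)
  have hV_notMem : V ∉ crossOneMonoid (F : Set G) := fun hV_mem =>
    hU.notMem_crossOneMonoid (h.mem_of_add_mem hU.1.1 hV_mem hF)
  obtain ⟨l, hl⟩ := hV_zero.exists_mem_lengthSet
  have hl_pos := LengthSet.pos hl (by rintro rfl; exact hV_notMem (zero_mem _))
  have hlt : 1 + l < F.card := by
    have hk := crossNumber_trivialSum F
    rw [hV, crossNumber_add] at hk
    have := h.lcn.lt_crossNumber hV_notMem hl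
    exact_mod_cast (by linarith [hU.2] : (1 + l : ℚ) < F.card)
  have := add_sInf_deltaSet_le (LengthSet.add hU.1.one_mem_lengthSet hl)
    (hV ▸ card_mem_lengthSet_trivialSum subset_rfl) hlt
  obtain rfl : l = 1 := by have := h.card_le; omega
  exact ⟨V, h.lcn.isLargeAtom (isAtomSeq_of_one_mem_lengthSet hl) hV_notMem, hV.symm⟩

lemma crossNumber_add_one_lt (h : IsTightLCNSet F) (hU : IsLargeAtom (F : Set G) U) :
    crossNumber U + 1 < F.card := by
  obtain ⟨V, hV, hUV⟩ := h.exists_add_eq_trivialSum hU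
  rw [← crossNumber_trivialSum, ← hUV, crossNumber_add]
  linarith [hV.2]

lemma card_eq (h : IsTightLCNSet F) : F.card = sInf (DeltaSet (F : Set G)) + 2 := by
  obtain ⟨U, hU⟩ := h.lcn.exists_isLargeAtom h.minimal.1
  obtain ⟨V, hV, hUV⟩ := h.exists_add_eq_trivialSum hU
  have hlt : 2 < F.card := by
    exact_mod_cast (by linarith [hU.2, h.crossNumber_add_one_lt hU] : (2 : ℚ) < F.card)
  have := add_sInf_deltaSet_le
    (hUV ▸ LengthSet.add hU.1.one_mem_lengthSet hV.1.one_mem_lengthSet)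
    (card_mem_lengthSet_trivialSum subset_rfl) hlt
  have := h.card_le
  omega

lemma card_le_of_mem_lengthSet_add (h : IsTightLCNSet F) (hU : IsAtomSeq (F : Set G) U)
    (hV : IsAtomSeq (F : Set G) V) {k : ℕ} (hk : k ∈ LengthSet (F : Set G) (U + V))
    (hlt : 2 < k) : F.card ≤ k := by
  rw [h.card_eq, add_comm]
  exact add_sInf_deltaSet_le (LengthSet.add hU.one_mem_lengthSet hV.one_mem_lengthSet) hk hlt

end IsTightLCNSet

variable [DecidableEq G]

/-- The set of those `x ∈ F` whose multiplicity in `U` is at least `ord x / 2`. -/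
noncomputable def heavyPart (F : Finset G) (U : Multiset G) : Finset G :=
  F.filter fun x => addOrderOf x ≤ 2 * U.count x

lemma mem_heavyPart_iff : x ∈ heavyPart F U ↔ x ∈ F ∧ addOrderOf x ≤ 2 * U.count x :=
  Finset.mem_filter

lemma heavyPart_subset : heavyPart F U ⊆ F := Finset.filter_subset _ _

lemma count_add_count_of_add_eq_trivialSum (h : U + V = trivialSum F) (hx : x ∈ F) :
    U.count x + V.count x = addOrderOf x := by
  rw [← count_add, h, count_trivialSum, if_pos hx]

lemma heavyPart_eq_sdiff_of_add_eq_trivialSum (hodd : Odd (AddMonoid.exponent G))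
    (h : U + V = trivialSum F) : heavyPart F V = F \ heavyPart F U := by
  ext x
  simp only [Finset.mem_sdiff, mem_heavyPart_iff]
  refine and_congr_right fun hx => ?_
  have := count_add_count_of_add_eq_trivialSum h hx
  obtain ⟨k, hk⟩ := hodd.of_dvd_nat (AddMonoid.addOrder_dvd_exponent x)
  simp only [hx, true_and]
  omega

lemma card_heavyPart_add_card_heavyPart (hodd : Odd (AddMonoid.exponent G))
    (hUV : U + V = trivialSum F) :
    (heavyPart F U).card + (heavyPart F V).card = F.card := by
  rw [heavyPart_eq_sdiff_of_add_eq_trivialSum hodd hUV, add_comm,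
    Finset.card_sdiff_add_card_eq_card heavyPart_subset]

lemma two_mul_count_lt_of_heavyPart_eq (hs : heavyPart F U = {s}) (hx : x ∈ F) (hxs : x ≠ s) :
    2 * U.count x < addOrderOf x := by
  by_contra! hle
  exact hxs (Finset.mem_singleton.1 (hs ▸ mem_heavyPart_iff.2 ⟨hx, hle⟩))

lemma exists_eq_trivialSum_add {G₀ : Set G} (hB : IsZeroSumSeq G₀ B)
    (hX : ∀ x ∈ X, addOrderOf x ≤ B.count x) :
    ∃ S, IsZeroSumSeq G₀ S ∧ B = trivialSum X + S := by
  have hle : trivialSum X ≤ B := le_iff_count.2 fun x => by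
    rw [count_trivialSum]
    split_ifs with hx
    · exact hX x hx
    · exact Nat.zero_le _
  obtain ⟨S, rfl⟩ := Multiset.le_iff_exists_add.1 hle
  have hsum : (trivialSum X).sum = 0 := by
    rw [trivialSum, ← coe_sumAddMonoidHom, _root_.map_sum]
    exact Finset.sum_eq_zero fun x _ => sum_trivialAtom x
  exact ⟨S, hB.of_add_left hsum, rfl⟩

namespace IsTightLCNSet

variable [Finite G]

lemma exists_add_eq_add_trivialAtom (h : IsTightLCNSet F) (hU : IsLargeAtom (F : Set G) U)
    (hA : IsCrossOneAtom (F : Set G) A) (hz : z ∈ F) (hUA : U.count z ≤ A.count z) :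
    ∃ U', IsLargeAtom (F : Set G) U' ∧ U' + A = U + trivialAtom z := by
  obtain ⟨V, hV, hUV⟩ := h.exists_add_eq_trivialSum hU
  have hz_mem := trivialAtom_mem_crossOneMonoid (G₀ := (F : Set G)) hz
  have hz_atom := isCrossOneAtom_trivialAtom (G₀ := (F : Set G)) hz
  have hle : trivialAtom z ≤ V + A := by
    rw [trivialAtom_le_iff, count_add]
    have := count_add_count_of_add_eq_trivialSum hUV hz
    omega
  obtain ⟨S, hS⟩ := Multiset.le_iff_exists_add.1 hle
  have hS_zero := IsZeroSumSeq.of_add_left hz_atom.1.1.2 (hS ▸ hV.1.1.add hA.1.1)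
  have hS_notMem : S ∉ crossOneMonoid (F : Set G) := fun hS_mem =>
    hV.notMem_crossOneMonoid
      (h.mem_of_add_mem hV.1.1 hA.mem_crossOneMonoid (hS ▸ add_mem hz_mem hS_mem))
  obtain ⟨l, hl⟩ := hS_zero.exists_mem_lengthSet
  have hl_pos := LengthSet.pos hl (by rintro rfl; exact hS_notMem (zero_mem _))
  have hlt : 1 + l < F.card := by
    have hk := congrArg crossNumber hS
    rw [crossNumber_add, crossNumber_add, hA.2, hz_atom.2] at hk
    have := h.lcn.lt_crossNumber hS_notMem hl
    exact_mod_cast (by linarith [h.crossNumber_add_one_lt hV] : (1 + l : ℚ) < F.card)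
  obtain rfl : l = 1 := by
    by_contra hl_ne
    exact hlt.not_ge (h.card_le_of_mem_lengthSet_add hV.1 hA.1
      (hS ▸ LengthSet.add hz_atom.1.one_mem_lengthSet hl) (by omega))
  obtain ⟨U', hU', hSU'⟩ := h.exists_add_eq_trivialSum
    (h.lcn.isLargeAtom (isAtomSeq_of_one_mem_lengthSet hl) hS_notMem)
  refine ⟨U', hU', add_left_cancel (a := V + S) ?_⟩
  calc V + S + (U' + A) = (S + U') + (V + A) := by abel
    _ = (U + V) + (trivialAtom z + S) := by rw [hSU', hUV, hS]
    _ = V + S + (U + trivialAtom z) := by abel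

-- Since `exp G` is odd, `U` differs from the good sequence `exp G • U` by a multiple of `U + U`, so
-- `S ∈ crossOneMonoid F` would force `U ∈ crossOneMonoid F`.
lemma exists_mem_lengthSet_add_self (h : IsTightLCNSet F) (hodd : Odd (AddMonoid.exponent G))
    (hU : IsLargeAtom (F : Set G) U) :
    ∃ S, ∃ l ∈ LengthSet (F : Set G) S, U + U = trivialSum (heavyPart F U) + S ∧ 0 < l ∧
      (l + (heavyPart F U).card : ℚ) < 2 * crossNumber U := by
  obtain ⟨S, hS_zero, hS⟩ := exists_eq_trivialSum_add (hU.1.1.add hU.1.1) (X := heavyPart F U)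
    fun x hx => by
      have := (mem_heavyPart_iff.1 hx).2
      rw [count_add]
      omega
  have hS_notMem : S ∉ crossOneMonoid (F : Set G) := fun hS_mem => by
    obtain ⟨k, hk⟩ := hodd
    have h_double : U + U ∈ crossOneMonoid (F : Set G) :=
      hS ▸ add_mem (trivialSum_mem_crossOneMonoid (by exact_mod_cast heavyPart_subset)) hS_mem
    have h_exp := exponent_nsmul_mem_crossOneMonoid hU.1.1.1
    rw [hk, add_comm, add_nsmul, one_nsmul, mul_comm, mul_nsmul', two_nsmul] at h_exp
    exact hU.notMem_crossOneMonoid (h.mem_of_add_mem hU.1.1 (nsmul_mem h_double k) h_exp)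
  obtain ⟨l, hl⟩ := hS_zero.exists_mem_lengthSet
  refine ⟨S, l, hl, hS, LengthSet.pos hl (by rintro rfl; exact hS_notMem (zero_mem _)), ?_⟩
  have hk := congrArg crossNumber hS
  rw [crossNumber_add, crossNumber_add, crossNumber_trivialSum] at hk
  linarith [h.lcn.lt_crossNumber hS_notMem hl]

lemma card_lt_two_mul_crossNumber (h : IsTightLCNSet F) (hodd : Odd (AddMonoid.exponent G))
    (hU : IsLargeAtom (F : Set G) U) (htwo : 2 ≤ (heavyPart F U).card) :
    (F.card : ℚ) < 2 * crossNumber U := by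
  obtain ⟨S, l, hl, hS, hl_pos, hlt⟩ := h.exists_mem_lengthSet_add_self hodd hU
  refine lt_of_le_of_lt ?_ hlt
  rw [add_comm]
  exact_mod_cast h.card_le_of_mem_lengthSet_add hU.1 hU.1
    (hS ▸ LengthSet.add (card_mem_lengthSet_trivialSum (by exact_mod_cast heavyPart_subset)) hl)
    (by omega)

lemma heavyPart_ne (h : IsTightLCNSet F) (hodd : Odd (AddMonoid.exponent G))
    (hU : IsLargeAtom (F : Set G) U) : heavyPart F U ≠ F := by
  intro hF
  obtain ⟨S, l, hl, hS, hl_pos, hlt⟩ := h.exists_mem_lengthSet_add_self hodd hU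
  obtain ⟨V, hV, hUV⟩ := h.exists_add_eq_trivialSum hU
  rw [hF] at hS hlt
  have hle : F.card ≤ 1 + 1 + l := h.card_le_of_mem_lengthSet_add hU.1 hU.1
    (by rw [hS, ← hUV]; exact
      LengthSet.add (LengthSet.add hU.1.one_mem_lengthSet hV.1.one_mem_lengthSet) hl) (by omega)
  have : (F.card : ℚ) ≤ 1 + 1 + l := by exact_mod_cast hle
  linarith [h.crossNumber_add_one_lt hU]

lemma card_heavyPart_eq_one_or (h : IsTightLCNSet F) (hodd : Odd (AddMonoid.exponent G))
    (hU : IsLargeAtom (F : Set G) U) :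
    (heavyPart F U).card = 1 ∨ (heavyPart F U).card + 1 = F.card := by
  obtain ⟨V, hV, hUV⟩ := h.exists_add_eq_trivialSum hU
  have hcard := card_heavyPart_add_card_heavyPart hodd hUV
  have hU_lt := Finset.card_lt_card
    (heavyPart_subset.ssubset_of_ne (h.heavyPart_ne hodd hU))
  have hV_lt := Finset.card_lt_card
    (heavyPart_subset.ssubset_of_ne (h.heavyPart_ne hodd hV))
  by_contra! hne
  have hU_cross := h.card_lt_two_mul_crossNumber hodd hU (by omega)
  have hV_cross := h.card_lt_two_mul_crossNumber hodd hV (by omega)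
  have hk := crossNumber_trivialSum F
  rw [← hUV, crossNumber_add] at hk
  linarith

lemma exists_heavyPart_eq_singleton (h : IsTightLCNSet F) (hodd : Odd (AddMonoid.exponent G)) :
    ∃ U, IsLargeAtom (F : Set G) U ∧ ∃ s ∈ F, heavyPart F U = {s} := by
  suffices ∃ U, IsLargeAtom (F : Set G) U ∧ (heavyPart F U).card = 1 by
    obtain ⟨U, hU, hcard⟩ := this
    obtain ⟨s, hs⟩ := Finset.card_eq_one.1 hcard
    exact ⟨U, hU, s, heavyPart_subset (hs ▸ Finset.mem_singleton_self s), hs⟩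
  obtain ⟨U, hU⟩ := h.lcn.exists_isLargeAtom h.minimal.1
  obtain ⟨V, hV, hUV⟩ := h.exists_add_eq_trivialSum hU
  have := card_heavyPart_add_card_heavyPart hodd hUV
  rcases h.card_heavyPart_eq_one_or hodd hU with hone | hcard
  · exact ⟨U, hU, hone⟩
  · exact ⟨V, hV, by omega⟩

lemma exists_addOrderOf_lt_two_mul_count (h : IsTightLCNSet F) (hU : IsLargeAtom (F : Set G) U)
    (hs : heavyPart F U = {s}) (hA : IsCrossOneAtom (F : Set G) A) (hsA : s ∉ A) :
    ∃ z ∈ F, z ≠ s ∧ addOrderOf z < 2 * A.count z := by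
  obtain ⟨V, hV, hUV⟩ := h.exists_add_eq_trivialSum hU
  have hAV : ¬A ≤ V := fun hle => by
    obtain rfl := hV.1.eq_of_le hA.1.1.2 hA.1.2.1 hle
    exact hV.2.ne' hA.2
  simp only [le_iff_count, not_forall, not_le] at hAV
  obtain ⟨z, hz⟩ := hAV
  have hzA : z ∈ A := count_pos.1 (by omega)
  have hzF : z ∈ F := hA.1.1.1 z hzA
  have hzs : z ≠ s := by rintro rfl; exact hsA hzA
  have := count_add_count_of_add_eq_trivialSum hUV hzF
  have := two_mul_count_lt_of_heavyPart_eq hs hzF hzs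
  exact ⟨z, hzF, hzs, by omega⟩

lemma exists_count_lt_count (h : IsTightLCNSet F) (hodd : Odd (AddMonoid.exponent G))
    (hcard : 4 ≤ F.card) (hU : IsLargeAtom (F : Set G) U) (hs : heavyPart F U = {s})
    (hA : IsCrossOneAtom (F : Set G) A) (hsA : s ∉ A) (hz : z ∈ F) (hzs : z ≠ s)
    (hA_ne : A ≠ trivialAtom z) (hzA : addOrderOf z < 2 * A.count z) :
    ∃ U', IsLargeAtom (F : Set G) U' ∧ heavyPart F U' = {s} ∧ U.count z < U'.count z := by
  have hzU := two_mul_count_lt_of_heavyPart_eq hs hz hzs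
  obtain ⟨U', hU', hUA⟩ := h.exists_add_eq_add_trivialAtom hU hA hz (by omega)
  have hcount (x : G) :
      U'.count x + A.count x = U.count x + if z = x then addOrderOf z else 0 := by
    rw [← count_add, hUA, count_add, count_trivialAtom]
  have hs_mem : s ∈ heavyPart F U' := by
    have hsU : s ∈ heavyPart F U := hs ▸ Finset.mem_singleton_self s
    have := hcount s
    rw [count_eq_zero_of_notMem hsA, add_zero, if_neg hzs, add_zero] at this
    rwa [mem_heavyPart_iff, this, ← mem_heavyPart_iff]
  have hsub : heavyPart F U' ⊆ {s, z} := fun x hx => by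
    obtain ⟨hxF, hx⟩ := mem_heavyPart_iff.1 hx
    by_contra! hne
    simp only [Finset.mem_insert, Finset.mem_singleton, not_or] at hne
    have := two_mul_count_lt_of_heavyPart_eq hs hxF hne.1
    have := hcount x
    rw [if_neg (Ne.symm hne.2)] at this
    omega
  have hone : (heavyPart F U').card = 1 := by
    have := (Finset.card_le_card hsub).trans Finset.card_le_two
    have := h.card_heavyPart_eq_one_or hodd hU'
    omega
  have hcount_z := hcount z
  rw [if_pos rfl] at hcount_z
  have := hA.1.count_lt_addOrderOf hA_ne
  exact ⟨U', hU', (Finset.eq_of_subset_of_card_le (Finset.singleton_subset_iff.2 hs_mem)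
    (by simp [hone])).symm, by omega⟩

lemma exists_eq_trivialAtom_of_notMem (h : IsTightLCNSet F) (hodd : Odd (AddMonoid.exponent G))
    (hU : IsLargeAtom (F : Set G) U) (hs : heavyPart F U = {s})
    (hA : IsCrossOneAtom (F : Set G) A) (hsA : s ∉ A) : ∃ g, A = trivialAtom g := by
  rcases le_or_gt (AddMonoid.exponent G) 3 with hexp | hexp
  · exact h.exists_eq_trivialAtom_of_exponent_le_three hodd hexp hA
  have hcard : 4 ≤ F.card := by
    rw [h.card_eq]
    exact hexp.trans_le h.exponent_le
  by_contra! hA_ne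
  obtain ⟨z, hz, hzs, hzA⟩ := h.exists_addOrderOf_lt_two_mul_count hU hs hA hsA
  have hunbounded (k : ℕ) :
      ∃ V, IsLargeAtom (F : Set G) V ∧ heavyPart F V = {s} ∧ k ≤ V.count z := by
    induction k with
    | zero => exact ⟨U, hU, hs, Nat.zero_le _⟩
    | succ k ih =>
      obtain ⟨V, hV, hVs, hk⟩ := ih
      obtain ⟨V', hV', hVs', hlt⟩ :=
        h.exists_count_lt_count hodd hcard hV hVs hA hsA hz hzs (hA_ne z) hzA
      exact ⟨V', hV', hVs', by omega⟩
  obtain ⟨V, hV, -, hle⟩ := hunbounded (addOrderOf z)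
  exact hle.not_gt (hV.count_lt_addOrderOf z)

end IsTightLCNSet

end Tight

theorem IsTightLCNSet.exists_isIndependentSet_sdiff {G : Type*} [AddCommGroup G] [Finite G]
    {F : Finset G} (h : IsTightLCNSet F) (hodd : Odd (AddMonoid.exponent G)) :
    ∃ g ∈ F, IsIndependentSet ((F : Set G) \ {g}) := by
  classical
  obtain ⟨U, hU, s, hs, hUs⟩ := h.exists_heavyPart_eq_singleton hodd
  refine ⟨s, hs, isIndependentSet_of_forall_exists_eq_trivialAtom ?_ fun A hA => ?_⟩
  · rintro ⟨h0, -⟩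
    have h0U := count_pos.2 (h.minimal.mem_of_isLargeAtom hU h0)
    have := hU.count_lt_addOrderOf 0
    rw [addOrderOf_zero] at this
    omega
  · have hsA : s ∉ A := fun hsA => (hA.1.1 s hsA).2 rfl
    have hA_one := hA.crossNumber_eq_one_of_deltaSet_eq_empty
      (h.minimal.2 _ (Set.sdiff_singleton_ssubset.2 hs))
    exact h.exists_eq_trivialAtom_of_notMem hodd hU hUs
      ⟨hA.of_forall_mem fun x hx => (hA.1.1 x hx).1, hA_one⟩ hsA

section LowerBound

variable {G : Type*} [AddCommGroup G]

lemma pos_of_mem_deltaSet {G₀ : Set G} {d : ℕ} (hd : d ∈ DeltaSet G₀) : 0 < d := by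
  obtain ⟨_, -, -, x, -, y, -, hxy, rfl, -⟩ := hd
  exact Nat.sub_pos_of_lt hxy

lemma dvd_of_mem_deltaSet {G₀ : Set G} {c m : ℕ} (hc : c ≠ 0) (w : Multiset G →+ ℕ)
    (hw : ∀ A, IsAtomSeq G₀ A → w A ≡ c [MOD c * m]) {d : ℕ} (hd : d ∈ DeltaSet G₀) : m ∣ d := by
  obtain ⟨B, -, -, x, hx, y, hy, hxy, rfl, -⟩ := hd
  have hlength {k : ℕ} (hk : k ∈ LengthSet G₀ B) : w B ≡ c * k [MOD c * m] := by
    obtain ⟨l, rfl, hl, rfl⟩ := hk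
    rw [map_multiset_sum]
    clear hx hy
    induction l using Multiset.induction_on with
    | empty => exact Nat.ModEq.rfl
    | cons A l ih =>
      rw [Multiset.map_cons, sum_cons, card_cons, mul_add, mul_one, add_comm]
      exact (ih fun X hX => hl X (mem_cons_of_mem hX)).add (hw A (hl A (mem_cons_self A l)))
  exact (Nat.modEq_iff_dvd' hxy.le).1
    (((hlength hx).symm.trans (hlength hy)).mul_left_cancel' hc)

/-- The family `e` is a basis of a subgroup isomorphic to a power of `ℤ / p`. -/
def IsModBasis {ι : Type*} [Fintype ι] (p : ℕ) (e : ι → G) : Prop :=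
  ∀ c : ι → ℤ, ∑ i, c i • e i = 0 ↔ ∀ i, (p : ℤ) ∣ c i

lemma IsModBasis.map {ι H : Type*} [Fintype ι] [AddCommGroup H] {p : ℕ} {e : ι → H}
    (h : IsModBasis p e) {f : H →+ G} (hf : Function.Injective f) : IsModBasis p (f ∘ e) := by
  intro c
  rw [← h c, ← map_eq_zero_iff f hf, map_sum]
  simp only [Function.comp_apply, map_zsmul]

lemma isModBasis_basis {ι : Type*} [Fintype ι] {p : ℕ} [Module (ZMod p) G]
    (b : Module.Basis ι (ZMod p) G) : IsModBasis p b := by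
  intro c
  calc ∑ i, c i • b i = 0 ↔ ∑ i, (c i : ZMod p) • b i = 0 := by
        simp only [Int.cast_smul_eq_zsmul]
    _ ↔ ∀ i, (c i : ZMod p) = 0 :=
        ⟨Fintype.linearIndependent_iff.1 b.linearIndependent _, fun h => by simp [h]⟩
    _ ↔ ∀ i, (p : ℤ) ∣ c i := by simp only [ZMod.intCast_zmod_eq_zero_iff_dvd]

lemma exists_card_eq_pow_and_isModBasis (G : Type*) [AddCommGroup G] [Finite G] (p : ℕ)
    [Fact p.Prime] [Module (ZMod p) G] :
    ∃ k, Nat.card G = p ^ k ∧ ∃ e : Fin k → G, IsModBasis p e := by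
  have : Module.Finite (ZMod p) G := Module.Finite.of_finite
  refine ⟨_, ?_, _, isModBasis_basis (Module.finBasis (ZMod p) G)⟩
  rw [Module.natCard_eq_pow_finrank (K := ZMod p), Nat.card_zmod]

lemma exists_isModBasis [Finite G] {p : ℕ} (hp : p.Prime) :
    ∃ e : Fin (pRank G p) → G, IsModBasis p e := by
  have : Fact p.Prime := ⟨hp⟩
  let H := (nsmulAddMonoidHom (α := G) p).ker
  let _ : Module (ZMod p) H := AddCommGroup.zmodModule fun x => Subtype.ext x.2
  obtain ⟨k, hcard, e, he⟩ := exists_card_eq_pow_and_isModBasis H p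
  have hrank : pRank G p = k := by
    rw [pRank, show Nat.card {x : G // p • x = 0} = Nat.card H from rfl, hcard,
      Nat.log_pow hp.one_lt]
  rw [hrank]
  exact ⟨_, he.map H.subtype_injective⟩

/-- The family `e` together with the sum of its members. If `e` is a basis of `(ℤ / p)^r`, then all
distances of this set are multiples of `r - 1`. -/
def basisWithSum {ι : Type*} [Fintype ι] (e : ι → G) : Set G := insert (∑ i, e i) (Set.range e)

namespace IsModBasis

variable {ι : Type*} [Fintype ι] {p : ℕ} {e : ι → G}

lemma zsmul_eq_zero_iff (h : IsModBasis p e) (i : ι) (n : ℤ) : n • e i = 0 ↔ (p : ℤ) ∣ n := by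
  classical
  have := h (Pi.single i n)
  rw [Fintype.sum_eq_single i fun j hj => by simp [hj], Pi.single_eq_same] at this
  refine this.trans ⟨fun h => by simpa using h i, fun hn j => ?_⟩
  obtain rfl | hj := eq_or_ne j i
  · rwa [Pi.single_eq_same]
  · rw [Pi.single_eq_of_ne hj]
    exact dvd_zero _

lemma addOrderOf_apply (h : IsModBasis p e) (i : ι) : addOrderOf (e i) = p := by
  refine Nat.dvd_antisymm ?_ ?_ <;> rw [← Int.natCast_dvd_natCast]
  · rw [addOrderOf_dvd_iff_zsmul_eq_zero, h.zsmul_eq_zero_iff]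
  · rw [← h.zsmul_eq_zero_iff i, ← addOrderOf_dvd_iff_zsmul_eq_zero]

lemma addOrderOf_sum [Nonempty ι] (h : IsModBasis p e) : addOrderOf (∑ i, e i) = p := by
  have hzsmul (n : ℤ) : n • ∑ i, e i = 0 ↔ (p : ℤ) ∣ n := by
    rw [Finset.smul_sum, h fun _ => n, forall_const]
  refine Nat.dvd_antisymm ?_ ?_ <;> rw [← Int.natCast_dvd_natCast]
  · rw [addOrderOf_dvd_iff_zsmul_eq_zero, hzsmul]
  · rw [← hzsmul, ← addOrderOf_dvd_iff_zsmul_eq_zero]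

lemma injective (h : IsModBasis p e) (hp : 1 < p) : Function.Injective e := fun i j hij => by
  classical
  by_contra hne
  have := (h (Pi.single i 1 - Pi.single j 1)).1
    (by simp [sub_smul, Pi.single_apply, Finset.sum_sub_distrib, hij]) i
  simp only [Pi.sub_apply, Pi.single_eq_same, Pi.single_eq_of_ne hne, sub_zero] at this
  exact hp.ne' (by exact_mod_cast Int.eq_one_of_dvd_one (by positivity) this)

lemma apply_ne_sum [Nontrivial ι] (h : IsModBasis p e) (hp : 1 < p) (i : ι) :
    e i ≠ ∑ i, e i := fun hi => by
  classical
  obtain ⟨j, hj⟩ := exists_ne i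
  have := (h (1 - Pi.single i 1)).1
    (by simp [sub_smul, Pi.single_apply, Finset.sum_sub_distrib, ← hi]) j
  simp only [Pi.sub_apply, Pi.one_apply, Pi.single_eq_of_ne hj, sub_zero] at this
  exact hp.ne' (by exact_mod_cast Int.eq_one_of_dvd_one (by positivity) this)

variable [Nontrivial ι] {A : Multiset G}

lemma sum_map_eq [DecidableEq G] {M : Type*} [AddCommMonoid M] (h : IsModBasis p e) (hp : 1 < p)
    (hA : ∀ x ∈ A, x ∈ basisWithSum e) (f : G → M) :
    (A.map f).sum = A.count (∑ i, e i) • f (∑ i, e i) + ∑ i, A.count (e i) • f (e i) := by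
  have hsub : A.toFinset ⊆ insert (∑ i, e i) (Finset.univ.image e) := fun x hx => by
    simpa [basisWithSum, eq_comm] using hA x (mem_toFinset.1 hx)
  rw [Finset.sum_multiset_map_count, Finset.sum_subset hsub fun x _ hx => by
      rw [count_eq_zero_of_notMem (mt mem_toFinset.2 hx), zero_smul],
    Finset.sum_insert (by simpa using h.apply_ne_sum hp),
    Finset.sum_image fun i _ j _ hij => h.injective hp hij]

lemma sum_eq_zero_iff [DecidableEq G] (h : IsModBasis p e) (hp : 1 < p)
    (hA : ∀ x ∈ A, x ∈ basisWithSum e) :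
    A.sum = 0 ↔ ∀ i, p ∣ A.count (∑ i, e i) + A.count (e i) := by
  have := h fun i => ↑(A.count (∑ i, e i) + A.count (e i))
  simp only [Int.natCast_dvd_natCast, natCast_zsmul] at this
  rw [← this, ← map_id A, h.sum_map_eq hp hA, map_id, id_def, Finset.smul_sum,
    ← Finset.sum_add_distrib]
  simp only [id_def, add_smul]

variable [Finite G]

lemma count_add_count_eq [DecidableEq G] (h : IsModBasis p e) (hp : 1 < p)
    (hA : IsAtomSeq (basisWithSum e) A) (hA_ne : ∀ i, A ≠ trivialAtom (e i)) (i : ι) :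
    A.count (∑ i, e i) + A.count (e i) = p := by
  have hdvd := (h.sum_eq_zero_iff hp hA.1.1).1 hA.1.2
  have hlt (i : ι) : A.count (e i) < p :=
    (hA.count_lt_addOrderOf (hA_ne i)).trans_eq (h.addOrderOf_apply i)
  have hle : A.count (∑ i, e i) ≤ p := by
    by_cases hA_sum : A = trivialAtom (∑ i, e i)
    · rw [hA_sum, count_trivialAtom, if_pos rfl, h.addOrderOf_sum]
    · exact (hA.count_lt_addOrderOf hA_sum).le.trans_eq h.addOrderOf_sum
  have hpos : 0 < A.count (∑ i, e i) := by
    obtain ⟨x, hx⟩ := exists_mem_of_ne_zero hA.2.1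
    obtain rfl | ⟨j, rfl⟩ := hA.1.1 x hx
    · exact count_pos.2 hx
    · have := Nat.le_of_dvd (by have := count_pos.2 hx; omega) (hdvd j)
      have := hlt j
      omega
  obtain ⟨k, hk⟩ := hdvd i
  have := hlt i
  obtain rfl : k = 1 := by
    have : 0 < k := Nat.pos_of_ne_zero (by rintro rfl; omega)
    have : k < 2 := lt_of_mul_lt_mul_left (a := p) (by omega) (Nat.zero_le _)
    omega
  rwa [mul_one] at hk

lemma card_sub_one_dvd_of_mem_deltaSet (h : IsModBasis p e) (hp : 1 < p) {d : ℕ}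
    (hd : d ∈ DeltaSet (basisWithSum e)) : Fintype.card ι - 1 ∣ d := by
  classical
  let w : Multiset G →+ ℕ :=
    ∑ i, (countAddMonoidHom (∑ i, e i) + countAddMonoidHom (e i))
  have hw (A : Multiset G) : w A = ∑ i, (A.count (∑ i, e i) + A.count (e i)) := by
    simp [w]
  refine dvd_of_mem_deltaSet (zero_lt_one.trans hp).ne' w (fun A hA => ?_) hd
  by_cases hA_ne : ∀ i, A ≠ trivialAtom (e i)
  · have hcard : Fintype.card ι = 1 + (Fintype.card ι - 1) := by
      have := Fintype.card_pos (α := ι)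
      omega
    rw [hw, Finset.sum_congr rfl fun i _ => h.count_add_count_eq hp hA hA_ne i,
      Finset.sum_const, Finset.card_univ, smul_eq_mul, hcard, add_mul, one_mul, mul_comm _ p]
    simp [Nat.ModEq]
  · push Not at hA_ne
    obtain ⟨i, rfl⟩ := hA_ne
    rw [hw, Fintype.sum_eq_single i fun j hj => by
        simp [count_trivialAtom, h.apply_ne_sum hp i, (h.injective hp).eq_iff, hj.symm],
      count_trivialAtom, count_trivialAtom, if_neg (h.apply_ne_sum hp i), if_pos rfl,
      h.addOrderOf_apply, zero_add]

-- With `a` the multiplicity of the sum and `r` the size of the basis, a nontrivial atom has cross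
-- number `(a + r * (p - a)) / p`, which is `1` only for `a = p`.
lemma dvd_count_sum_of_deltaSet_eq_empty [DecidableEq G] (h : IsModBasis p e) (hp : 1 < p)
    (hΔ : DeltaSet (basisWithSum e) = ∅) (hA : IsAtomSeq (basisWithSum e) A) :
    p ∣ A.count (∑ i, e i) := by
  by_cases hA_ne : ∀ i, A ≠ trivialAtom (e i)
  · have hcount := h.count_add_count_eq hp hA hA_ne
    have hcross := hA.crossNumber_eq_one_of_deltaSet_eq_empty hΔ
    rw [crossNumber, h.sum_map_eq hp hA.1.1, h.addOrderOf_sum] at hcross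
    simp only [h.addOrderOf_apply] at hcross
    rw [← Finset.sum_smul, ← add_smul, nsmul_eq_mul, ← div_eq_mul_inv,
      div_eq_one_iff_eq (by positivity)] at hcross
    have hsum : A.count (∑ i, e i) + ∑ i, A.count (e i) = p := by exact_mod_cast hcross
    have hzero (i : ι) : A.count (e i) = 0 := by
      obtain ⟨j, hj⟩ := exists_ne i
      have := Finset.add_le_sum (fun k _ => Nat.zero_le (A.count (e k))) (Finset.mem_univ i)
        (Finset.mem_univ j) hj.symm
      have := hcount j
      omega
    rw [Finset.sum_eq_zero fun i _ => hzero i, add_zero] at hsum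
    rw [hsum]
  · push Not at hA_ne
    obtain ⟨i, rfl⟩ := hA_ne
    rw [count_trivialAtom, if_neg (h.apply_ne_sum hp i)]
    exact dvd_zero p

lemma deltaSet_basisWithSum_nonempty (h : IsModBasis p e) (hp : 1 < p) :
    (DeltaSet (basisWithSum e)).Nonempty := by
  classical
  rw [Set.nonempty_iff_ne_empty]
  intro hΔ
  let W : Multiset G := {∑ i, e i} + ∑ i, replicate (p - 1) (e i)
  have hW_mem : ∀ x ∈ W, x ∈ basisWithSum e := fun x hx => by
    obtain hx | hx := Multiset.mem_add.1 hx
    · exact Or.inl (mem_singleton.1 hx)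
    · obtain ⟨i, -, hi⟩ := Multiset.mem_sum.1 hx
      exact Or.inr ⟨i, (eq_of_mem_replicate hi).symm⟩
  have hW_sum : W.count (∑ i, e i) = 1 := by
    rw [count_add, count_singleton_self, count_sum', Finset.sum_eq_zero fun i _ => by
      rw [count_replicate, if_neg (h.apply_ne_sum hp i)], add_zero]
  have hW_apply (i : ι) : W.count (e i) = p - 1 := by
    rw [count_add, count_singleton, if_neg (h.apply_ne_sum hp i), zero_add, count_sum',
      Fintype.sum_eq_single i fun j hj => by
        rw [count_replicate, if_neg ((h.injective hp).ne hj)], count_replicate_self]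
  have hW : IsZeroSumSeq (basisWithSum e) W := by
    refine ⟨hW_mem, (h.sum_eq_zero_iff hp hW_mem).2 fun i => ?_⟩
    rw [hW_sum, hW_apply, Nat.add_sub_cancel' hp.le]
  obtain ⟨_, l, rfl, hl, hl_sum⟩ := hW.exists_mem_lengthSet
  have hdvd : p ∣ W.count (∑ i, e i) := by
    rw [← hl_sum, ← coe_countAddMonoidHom, map_multiset_sum]
    refine Multiset.dvd_sum fun n hn => ?_
    obtain ⟨A, hA, rfl⟩ := Multiset.mem_map.1 hn
    exact h.dvd_count_sum_of_deltaSet_eq_empty hp hΔ (hl A hA)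
  rw [hW_sum] at hdvd
  exact hp.ne' (Nat.dvd_one.1 hdvd)

end IsModBasis

lemma bddAbove_pRank [Finite G] : BddAbove {r : ℕ | ∃ p : ℕ, p.Prime ∧ r = pRank G p} := by
  refine ⟨Nat.card G, ?_⟩
  rintro _ ⟨p, -, rfl⟩
  exact (Nat.log_le_self _ _).trans (Nat.card_le_card_of_injective _ Subtype.val_injective)

lemma pRank_le_rankG [Finite G] {p : ℕ} (hp : p.Prime) : pRank G p ≤ rankG G :=
  le_csSup bddAbove_pRank ⟨p, hp, rfl⟩

lemma bddAbove_deltaStar [Finite G] : BddAbove (DeltaStar G) := by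
  refine ((Set.finite_range fun G₀ : Set G => sInf (DeltaSet G₀)).subset ?_).bddAbove
  rintro _ ⟨G₀, -, rfl⟩
  exact ⟨G₀, rfl⟩

theorem rankG_sub_one_le_sSup_deltaStar [Finite G] : rankG G - 1 ≤ sSup (DeltaStar G) := by
  obtain ⟨p, hp, hrank⟩ : rankG G ∈ {r : ℕ | ∃ p : ℕ, p.Prime ∧ r = pRank G p} :=
    Nat.sSup_mem ⟨_, 2, Nat.prime_two, rfl⟩ bddAbove_pRank
  rw [hrank]
  rcases le_or_gt (pRank G p) 1 with hle | hlt
  · omega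
  have : Nontrivial (Fin (pRank G p)) := Fin.nontrivial_iff_two_le.2 hlt
  obtain ⟨e, he⟩ := exists_isModBasis (G := G) hp
  have hne := he.deltaSet_basisWithSum_nonempty hp.one_lt
  have hdvd := he.card_sub_one_dvd_of_mem_deltaSet hp.one_lt (Nat.sInf_mem hne)
  rw [Fintype.card_fin] at hdvd
  exact (Nat.le_of_dvd (pos_of_mem_deltaSet (Nat.sInf_mem hne)) hdvd).trans
    (le_csSup bddAbove_deltaStar ⟨_, hne, rfl⟩)

end LowerBound

/-- If `exp(G)` is odd, `r(G) ≥ exp(G) − 1`, and `G₀` is a minimal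
non-half-factorial LCN-set with `min Δ(G₀) = max Δ*(G)`, then some `g ∈ G₀` has
`G₀ \ {g}` independent. -/
theorem stmt_19 {G : Type*} [AddCommGroup G] [Fintype G] (G₀ : Set G)
    (hodd : Odd (AddMonoid.exponent G))
    (hr : AddMonoid.exponent G - 1 ≤ rankG G)
    (hmin : IsMinNonHalfFactorial G₀) (hLCN : IsLCNSet G₀)
    (hmax : sInf (DeltaSet G₀) = sSup (DeltaStar G)) :
    ∃ g ∈ G₀, IsIndependentSet (G₀ \ {g}) := by
  lift G₀ to Finset G using G₀.toFinite
  have hrank : rankG G ≤ sInf (DeltaSet (G₀ : Set G)) + 1 := by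
    rw [hmax]
    exact Nat.sub_le_iff_le_add.1 rankG_sub_one_le_sSup_deltaStar
  have hwide : IsWideLCNSet (G₀ : Set G) := ⟨hmin, hLCN, by omega⟩
  obtain ⟨p, hp, hcard⟩ := hwide.card_sub_one_le_pRank
  have := pRank_le_rankG (G := G) hp
  have htight : IsTightLCNSet G₀ := ⟨hwide, by omega⟩
  exact htight.exists_isIndependentSet_sdiff hodd
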